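/- Let G be a group, H a finite-dimensional complex inner product space, and U : G →* (H ≃ₗᵢ[ℂ] H) a unitary representation of G on H. Two unit vectors ψ, φ ∈ H are unitarily G-equivalent (there exists a G-invariant unitary V on H with V ψ = φ) if and only if ⟪ψ, A ψ⟫ = ⟪φ, A φ⟫ for every linear operator A in the ℂ-linear span of {U(g) : g ∈ G} inside the endomorphisms of H. (This condition is equivalent to the equality, for every irreducible representation μ of G, of the reductions onto irreps of the two states, i.e. of the partial traces over the multiplicity subsystems of the projections of |ψ⟩⟨ψ| and |φ⟩⟨φ| onto the isotypic component μ.) -/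

import Mathlib

open scoped ComplexInnerProductSpace

/-!
Equal expectations mean that the orbits `g ↦ U g ψ` and `g ↦ U g φ` have the same Gram matrix, so
`U g ψ ↦ U g φ` extends to a partial isometry `W` in the commutant of `U` whose initial space is
the span of the orbit of `ψ`. It remains to extend `W` to a unitary inside the commutant, which is
possible in any star subalgebra of operators on a finite-dimensional space: if `z` avoids finitely
many values, the operator
`T = W + (1 - W * star W) * (z - star W)⁻¹ * (1 - star W * W)`
is injective, agrees with `W` on the initial space of `W`, and maps the orthogonal complement of the
initial space into that of the final space. Hence `star T * T` is the identity on the initial space,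
and the unitary factor in the polar decomposition of `T` still extends `W`.
-/

open Module
open scoped InnerProductSpace

theorem exists_mem_mul_eq_one_of_isUnit {K A : Type*} [Field K] [Ring A] [Algebra K A]
    [FiniteDimensional K A] {M : Subalgebra K A} {a : A} (ha : a ∈ M) (hu : IsUnit a) :
    ∃ b ∈ M, a * b = 1 := by
  have hreg : (⟨a, ha⟩ : M) ∈ nonZeroDivisors M :=
    comap_nonZeroDivisors_le_of_injective (f := M.val) Subtype.val_injective
      hu.mem_nonZeroDivisors
  obtain ⟨b, hb⟩ :=
    (IsArtinianRing.isUnit_of_nonZeroDivisor_of_isIntegral' (R := K) hreg).exists_right_inv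
  exact ⟨b, b.2, congrArg Subtype.val hb⟩

/-- A partial isometry in a star semigroup, characterised algebraically: for operators on a
Hilbert space this says that `a` is isometric on the orthogonal complement of its kernel. The
initial projection is `star a * a` and the final projection is `a * star a`. -/
def IsPartialIsometry {A : Type*} [Mul A] [Star A] (a : A) : Prop :=
  a * star a * a = a

theorem IsPartialIsometry.star_mul_mul_star {A : Type*} [Semigroup A] [StarMul A] {a : A}
    (ha : IsPartialIsometry a) : star a * a * star a = star a := by
  simpa [mul_assoc] using congrArg star ha

section InnerProductSpace

variable {𝕜 : Type*} [RCLike 𝕜]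

theorem exists_linearIsometry_span_of_inner_eq {ι E F : Type*}
    [NormedAddCommGroup E] [InnerProductSpace 𝕜 E] [NormedAddCommGroup F] [InnerProductSpace 𝕜 F]
    {v : ι → E} {w : ι → F} (h : ∀ i j, ⟪v i, v j⟫_𝕜 = ⟪w i, w j⟫_𝕜) :
    ∃ L : Submodule.span 𝕜 (Set.range v) →ₗᵢ[𝕜] F, ∀ i hi, L ⟨v i, hi⟩ = w i := by
  let a := Finsupp.linearCombination 𝕜 v
  let b := Finsupp.linearCombination 𝕜 w
  have norm_eq (c : ι →₀ 𝕜) : ‖b c‖ = ‖a c‖ := by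
    have inner_eq : ⟪b c, b c⟫_𝕜 = ⟪a c, a c⟫_𝕜 := by
      simp only [a, b, Finsupp.linearCombination_apply, Finsupp.sum, sum_inner, inner_sum,
        inner_smul_left, inner_smul_right, h]
    rw [norm_eq_sqrt_re_inner (𝕜 := 𝕜), inner_eq, ← norm_eq_sqrt_re_inner]
  have apply_eq (c x) (hc : a c = x) : b.compLeftInverse a ⟨x, c, hc⟩ = b c :=
    LinearMap.compLeftInverse_apply_of_bdd _ _ ⟨1, fun d => by rw [norm_eq, one_mul]⟩ _ _ hc
  rw [← Finsupp.range_linearCombination]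
  refine ⟨⟨(b.compLeftInverse a).toLinearMap, ?_⟩, fun i _ => ?_⟩
  · rintro ⟨_, c, rfl⟩
    exact (congrArg norm (apply_eq c _ rfl)).trans (norm_eq c)
  · exact (apply_eq (Finsupp.single i 1) (v i) (by simp [a])).trans (by simp [b])

variable {H : Type*} [NormedAddCommGroup H] [InnerProductSpace 𝕜 H]

section orbit

variable {G : Type*} [Group G] {U : G →* (H ≃ₗᵢ[𝕜] H)}

theorem inner_map_map_eq_inner_inv_mul (g k : G) (x : H) :
    ⟪U g x, U k x⟫_𝕜 = ⟪x, U (g⁻¹ * k) x⟫_𝕜 := by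
  rw [← (U g).inner_map_map x]
  simp

theorem span_orbit_mem_invtSubmodule (g : G) (x : H) :
    Submodule.span 𝕜 (Set.range fun k => U k x) ∈
      End.invtSubmodule (U g).toLinearEquiv.toLinearMap := by
  rw [End.mem_invtSubmodule, Submodule.span_le]
  rintro _ ⟨k, rfl⟩
  exact Submodule.subset_span ⟨g * k, by simp⟩

end orbit

variable [FiniteDimensional 𝕜 H]

theorem exists_isSymmetric_mem_adjoin_apply_eq_smul {S : H →ₗ[𝕜] H} (hS : S.IsSymmetric)
    (f : ℝ → ℝ) :
    ∃ R ∈ Algebra.adjoin 𝕜 {S}, R.IsSymmetric ∧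
      ∀ (μ : ℝ) (x : H), S x = (μ : 𝕜) • x → R x = (f μ : 𝕜) • x := by
  let p : Polynomial 𝕜 := Lagrange.interpolate (End.finite_hasEigenvalue S).toFinset id
    fun μ => (f (RCLike.re μ) : 𝕜)
  have aeval_apply (μ : ℝ) (x : H) (hx : S x = (μ : 𝕜) • x) :
      Polynomial.aeval S p x = (f μ : 𝕜) • x := by
    rcases eq_or_ne x 0 with rfl | hx0
    · simp
    have hμ : End.HasEigenvector S (μ : 𝕜) x := ⟨End.mem_eigenspace_iff.2 hx, hx0⟩
    have eval_eq : p.eval (μ : 𝕜) = (f μ : 𝕜) := by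
      have hnode : (μ : 𝕜) ∈ (End.finite_hasEigenvalue S).toFinset := by
        simpa using End.hasEigenvalue_of_hasEigenvector hμ
      simpa only [id, RCLike.ofReal_re] using Lagrange.eval_interpolate_at_node (v := id)
        (fun μ => (f (RCLike.re μ) : 𝕜)) Function.injective_id.injOn hnode
    rw [End.aeval_apply_of_hasEigenvector hμ, eval_eq]
  refine ⟨_, Polynomial.aeval_mem_adjoin_singleton 𝕜 S, ?_, aeval_apply⟩
  let b := hS.eigenvectorBasis rfl
  have aeval_basis (i) : Polynomial.aeval S p (b i) = (f (hS.eigenvalues rfl i) : 𝕜) • b i :=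
    aeval_apply _ _ (hS.apply_eigenvectorBasis rfl i)
  rw [LinearMap.isSymmetric_iff_isSelfAdjoint, LinearMap.isSelfAdjoint_iff', eq_comm,
    LinearMap.eq_adjoint_iff_basis b.toBasis b.toBasis]
  intro i j
  simp only [OrthonormalBasis.coe_toBasis, aeval_basis, inner_smul_left, inner_smul_right,
    RCLike.conj_ofReal, b.inner_eq_ite]
  split_ifs with h <;> simp [h]

theorem pos_of_star_apply_apply_eq_smul {T : H →ₗ[𝕜] H} (hT : Function.Injective T) {μ : ℝ}
    {x : H} (hx : x ≠ 0) (h : star T (T x) = (μ : 𝕜) • x) : 0 < μ := by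
  have norm_sq : ‖T x‖ ^ 2 = μ * ‖x‖ ^ 2 := by
    have : ⟪x, star T (T x)⟫_𝕜 = ⟪T x, T x⟫_𝕜 := LinearMap.adjoint_inner_right T x (T x)
    rw [h, inner_smul_right, inner_self_eq_norm_sq_to_K, inner_self_eq_norm_sq_to_K] at this
    exact_mod_cast this.symm
  have hTx : 0 < ‖T x‖ ^ 2 := by
    have : T x ≠ 0 := (map_ne_zero_iff T hT).2 hx
    positivity
  exact pos_of_mul_pos_left (norm_sq ▸ hTx) (by positivity)

-- `V = T * (star T * T) ^ (-1/2)` is the unitary factor in the polar decomposition of `T`.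
theorem exists_mem_star_mul_self_eq_one_of_injective {M : StarSubalgebra 𝕜 (H →ₗ[𝕜] H)}
    {T : H →ₗ[𝕜] H} (hT : T ∈ M) (hinj : Function.Injective T) :
    ∃ V ∈ M, star V * V = 1 ∧ ∀ x, star T (T x) = x → V x = T x := by
  have hS : (star T * T).IsSymmetric :=
    (LinearMap.isSymmetric_iff_isSelfAdjoint _).2 (IsSelfAdjoint.star_mul_self T)
  obtain ⟨R, hR, hRsymm, hRapply⟩ :=
    exists_isSymmetric_mem_adjoin_apply_eq_smul hS fun t => (√t)⁻¹
  have hSM : star T * T ∈ M := mul_mem (star_mem hT) hT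
  have hRM : R ∈ M := Algebra.adjoin_singleton_le (S := M.toSubalgebra) hSM hR
  have hRstar : star R = R := (LinearMap.isSymmetric_iff_isSelfAdjoint R).1 hRsymm
  refine ⟨T * R, mul_mem hT hRM, ?_, fun x hx => ?_⟩
  · let b := hS.eigenvectorBasis rfl
    refine b.toBasis.ext fun i => ?_
    let μ := hS.eigenvalues rfl i
    have hμb : (star T * T) (b i) = (μ : 𝕜) • b i := hS.apply_eigenvectorBasis rfl i
    have hμ : 0 < μ := pos_of_star_apply_apply_eq_smul hinj (b.orthonormal.ne_zero i) hμb
    have hsqrt : (√μ)⁻¹ * (μ * (√μ)⁻¹) = 1 := by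
      rw [← div_eq_mul_inv, Real.div_sqrt, inv_mul_cancel₀ (Real.sqrt_pos.2 hμ).ne']
    calc (star (T * R) * (T * R)) (b.toBasis i)
        = R ((star T * T) (R (b i))) := by simp [hRstar]
      _ = (((√μ)⁻¹ * (μ * (√μ)⁻¹) : ℝ) : 𝕜) • b i := by
        simp only [hRapply μ _ hμb, map_smul, hμb, smul_smul]
        push_cast
        ring_nf
      _ = (1 : H →ₗ[𝕜] H) (b.toBasis i) := by simp [hsqrt]
  · have hRx : R x = x := by simpa using hRapply 1 x (by simpa using hx)
    rw [End.mul_apply, hRx]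

theorem injective_add_mul_mul_of_isPartialIsometry {W X : H →ₗ[𝕜] H} {z : 𝕜}
    (hW : IsPartialIsometry W) (hX : (algebraMap 𝕜 (H →ₗ[𝕜] H) z - star W) * X = 1)
    (hz : z⁻¹ ∉ spectrum 𝕜 W) :
    Function.Injective ⇑(W + (1 - W * star W) * X * (1 - star W * W)) := by
  rw [injective_iff_map_eq_zero]
  intro x hx
  have hWx : W x = 0 := by
    have : W * star W * (W + (1 - W * star W) * X * (1 - star W * W)) = W := by
      have hfinal : W * star W * (1 - W * star W) = 0 := by
        rw [mul_sub, mul_one, ← mul_assoc, hW, sub_self]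
      rw [mul_add, hW, mul_assoc (1 - _), ← mul_assoc (W * star W), hfinal, zero_mul, add_zero]
    rw [← this, End.mul_apply, hx, map_zero]
  have hXx : W (star W (X x)) = X x := by
    have : X x - W (star W (X x)) = 0 := by simpa [hWx] using hx
    exact (sub_eq_zero.1 this).symm
  have hzX : z • X x - star W (X x) = x := by simpa using LinearMap.congr_fun hX x
  have heig : z • W (X x) = X x := by
    have := congrArg W hzX
    rwa [map_sub, map_smul, hXx, hWx, sub_eq_zero] at this
  suffices X x = 0 by rw [← hzX, this, smul_zero, map_zero, sub_zero]
  by_contra hne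
  have hz0 : z ≠ 0 := by
    rintro rfl
    exact hne (by rw [← heig, zero_smul])
  have hvec : End.HasEigenvector W z⁻¹ (X x) :=
    ⟨End.mem_eigenspace_iff.2 ((eq_inv_smul_iff₀ hz0).2 heig), hne⟩
  exact hz (End.hasEigenvalue_of_hasEigenvector hvec).mem_spectrum

theorem IsPartialIsometry.exists_injective_mem_extending {M : StarSubalgebra 𝕜 (H →ₗ[𝕜] H)}
    {W : H →ₗ[𝕜] H} (hW : IsPartialIsometry W) (hWM : W ∈ M) :
    ∃ T ∈ M, Function.Injective T ∧ T * (star W * W) = W ∧ star T * W = star W * W := by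
  obtain ⟨z, hz⟩ : ∃ z : 𝕜, z ∉ spectrum 𝕜 (star W) ∪ (spectrum 𝕜 W)⁻¹ :=
    ((End.finite_spectrum _).union (End.finite_spectrum W).inv).exists_notMem
  rw [Set.mem_union, Set.mem_inv, not_or] at hz
  have hWsM : star W ∈ M := star_mem hWM
  obtain ⟨X, hXM, hX⟩ := exists_mem_mul_eq_one_of_isUnit (M := M.toSubalgebra)
    (sub_mem (algebraMap_mem M z) hWsM) (spectrum.notMem_iff.1 hz.1)
  have hinit : (1 - star W * W) * (star W * W) = 0 := by
    rw [sub_mul, one_mul, ← mul_assoc, hW.star_mul_mul_star, sub_self]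
  have hfinal : (1 - W * star W) * W = 0 := by rw [sub_mul, one_mul, hW, sub_self]
  refine ⟨W + (1 - W * star W) * X * (1 - star W * W),
    add_mem hWM (mul_mem (mul_mem (sub_mem (one_mem M) (mul_mem hWM hWsM)) hXM)
      (sub_mem (one_mem M) (mul_mem hWsM hWM))),
    injective_add_mul_mul_of_isPartialIsometry hW hX hz.2, ?_, ?_⟩
  · rw [add_mul, mul_assoc _ (1 - _), hinit, mul_zero, add_zero, ← mul_assoc, hW]
  · simp only [star_add, star_mul, star_sub, star_one, star_star, add_mul, mul_assoc _ _ W, hfinal,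
      mul_zero, add_zero]

theorem IsPartialIsometry.exists_mem_star_mul_self_eq_one_extending
    {M : StarSubalgebra 𝕜 (H →ₗ[𝕜] H)} {W : H →ₗ[𝕜] H} (hW : IsPartialIsometry W) (hWM : W ∈ M) :
    ∃ V ∈ M, star V * V = 1 ∧ V * (star W * W) = W := by
  obtain ⟨T, hTM, hinj, hTW, hTsW⟩ := hW.exists_injective_mem_extending hWM
  obtain ⟨V, hVM, hV, hVT⟩ := exists_mem_star_mul_self_eq_one_of_injective hTM hinj
  refine ⟨V, hVM, hV, LinearMap.ext fun x => ?_⟩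
  have hTx : T ((star W * W) x) = W x := LinearMap.congr_fun hTW x
  have hfix : star T (T ((star W * W) x)) = (star W * W) x := by
    rw [hTx]
    exact LinearMap.congr_fun hTsW x
  rw [End.mul_apply, hVT _ hfix, hTx]

theorem exists_linearIsometryEquiv_of_star_mul_self_eq_one {V : H →ₗ[𝕜] H} (hV : star V * V = 1) :
    ∃ e : H ≃ₗᵢ[𝕜] H, ∀ x, e x = V x := by
  have inner_map_map (x y : H) : ⟪V x, V y⟫_𝕜 = ⟪x, y⟫_𝕜 := by
    rw [← LinearMap.adjoint_inner_right V, ← LinearMap.star_eq_adjoint, ← End.mul_apply, hV,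
      End.one_apply]
  exact ⟨(V.isometryOfInner inner_map_map).toLinearIsometryEquiv rfl, fun _ => rfl⟩

/-- The operator on `H` that agrees with the isometry `L` on the subspace `K` and vanishes on the
orthogonal complement of `K`. -/
noncomputable def extendByZero {K : Submodule 𝕜 H} (L : K →ₗᵢ[𝕜] H) : H →ₗ[𝕜] H :=
  L.toLinearMap ∘ₗ K.orthogonalProjectionOnto.toLinearMap

section extendByZero

variable {K : Submodule 𝕜 H} (L : K →ₗᵢ[𝕜] H)

theorem extendByZero_apply_of_mem {x : H} (hx : x ∈ K) : extendByZero L x = L ⟨x, hx⟩ :=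
  congrArg L (K.orthogonalProjectionOnto_mem_subspace_eq_self ⟨x, hx⟩)

theorem star_extendByZero_mul_self : star (extendByZero L) * extendByZero L =
    K.starProjection.toLinearMap := by
  refine LinearMap.ext fun x => ext_inner_left 𝕜 fun y => ?_
  calc ⟪y, (star (extendByZero L) * extendByZero L) x⟫_𝕜
      = ⟪extendByZero L y, extendByZero L x⟫_𝕜 :=
        LinearMap.adjoint_inner_right (extendByZero L) y _
    _ = ⟪K.orthogonalProjectionOnto y, K.orthogonalProjectionOnto x⟫_𝕜 := L.inner_map_map _ _
    _ = ⟪y, K.starProjection x⟫_𝕜 := by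
      rw [Submodule.inner_orthogonalProjectionOnto_eq_of_mem_right, Submodule.starProjection_apply]

theorem commute_starProjection_of_mem_invtSubmodule {A : H →ₗ[𝕜] H}
    (hA : K ∈ End.invtSubmodule A) (hA' : K ∈ End.invtSubmodule (star A)) :
    Commute K.starProjection.toLinearMap A := by
  have hidem : IsIdempotentElem K.starProjection.toLinearMap :=
    congrArg ContinuousLinearMap.toLinearMap K.isIdempotentElem_starProjection.eq
  rw [LinearMap.IsIdempotentElem.commute_iff hidem, Submodule.range_starProjection,
    Submodule.ker_starProjection]
  exact ⟨hA, End.mem_invtSubmodule_adjoint_iff.1 hA'⟩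

theorem extendByZero_mul_starProjection :
    extendByZero L * K.starProjection.toLinearMap = extendByZero L :=
  LinearMap.ext fun x => extendByZero_apply_of_mem L (K.starProjection_apply_mem x)

theorem isPartialIsometry_extendByZero : IsPartialIsometry (extendByZero L) := by
  rw [IsPartialIsometry, mul_assoc, star_extendByZero_mul_self, extendByZero_mul_starProjection]

theorem commute_extendByZero {A : H →ₗ[𝕜] H} (hA : K ∈ End.invtSubmodule A)
    (hA' : K ∈ End.invtSubmodule (star A))
    (hL : Set.EqOn (A * extendByZero L) (extendByZero L * A) K) :
    Commute A (extendByZero L) := by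
  set P := K.starProjection.toLinearMap
  calc A * extendByZero L = A * extendByZero L * P := by
        rw [mul_assoc, extendByZero_mul_starProjection]
    _ = extendByZero L * A * P := LinearMap.ext fun x => hL (K.starProjection_apply_mem x)
    _ = extendByZero L * P * A := by
      rw [mul_assoc, mul_assoc, (commute_starProjection_of_mem_invtSubmodule hA hA').eq]
    _ = extendByZero L * A := by rw [extendByZero_mul_starProjection]

end extendByZero

/-- The commutant of a unitary representation: the star algebra of its self-intertwiners. -/
noncomputable def commutant {G : Type*} [Group G] (U : G →* (H ≃ₗᵢ[𝕜] H)) :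
    StarSubalgebra 𝕜 (H →ₗ[𝕜] H) :=
  StarSubalgebra.centralizer 𝕜 (Set.range fun g => (U g).toLinearEquiv.toLinearMap)

section commutant

variable {G : Type*} [Group G] {U : G →* (H ≃ₗᵢ[𝕜] H)}

theorem star_toLinearMap_map (g : G) :
    star (U g).toLinearEquiv.toLinearMap = (U g⁻¹).toLinearEquiv.toLinearMap := by
  rw [map_inv]
  exact (U g).adjoint_toLinearMap_eq_symm

theorem mem_commutant_iff {A : H →ₗ[𝕜] H} :
    A ∈ commutant U ↔ ∀ g, Commute (U g).toLinearEquiv.toLinearMap A := by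
  simp only [commutant, StarSubalgebra.mem_centralizer_iff, Set.forall_mem_range,
    star_toLinearMap_map]
  exact ⟨fun h g => (h g).1, fun h g => ⟨h g, h g⁻¹⟩⟩

theorem extendByZero_mem_commutant {ψ φ : H}
    (L : Submodule.span 𝕜 (Set.range fun k => U k ψ) →ₗᵢ[𝕜] H)
    (hL : ∀ k hk, L ⟨U k ψ, hk⟩ = U k φ) : extendByZero L ∈ commutant U := by
  refine mem_commutant_iff.2 fun g => commute_extendByZero L (span_orbit_mem_invtSubmodule g ψ)
    (star_toLinearMap_map (U := U) g ▸ span_orbit_mem_invtSubmodule g⁻¹ ψ) ?_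
  refine LinearMap.eqOn_span ?_
  rintro _ ⟨k, rfl⟩
  have hWU (k : G) : extendByZero L (U k ψ) = U k φ :=
    (extendByZero_apply_of_mem L (Submodule.subset_span ⟨k, rfl⟩)).trans (hL k _)
  have hWU_mul : extendByZero L (U g (U k ψ)) = U g (U k φ) := by simpa using hWU (g * k)
  simp [hWU, hWU_mul]

theorem exists_isPartialIsometry_mem_commutant {ψ φ : H}
    (h : ∀ g, ⟪ψ, U g ψ⟫_𝕜 = ⟪φ, U g φ⟫_𝕜) :
    ∃ W ∈ commutant U, IsPartialIsometry W ∧ (star W * W) ψ = ψ ∧ W ψ = φ := by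
  obtain ⟨L, hL⟩ := exists_linearIsometry_span_of_inner_eq (𝕜 := 𝕜) (v := fun g => U g ψ)
    (w := fun g => U g φ) fun g k => by simp only [inner_map_map_eq_inner_inv_mul, h]
  have hψ : ψ ∈ Submodule.span 𝕜 (Set.range fun g => U g ψ) :=
    Submodule.subset_span ⟨1, by simp⟩
  refine ⟨extendByZero L, extendByZero_mem_commutant L hL, isPartialIsometry_extendByZero L, ?_, ?_⟩
  · rw [star_extendByZero_mul_self]
    exact Submodule.starProjection_eq_self_iff.2 hψ
  · rw [extendByZero_apply_of_mem L hψ]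
    simpa using hL 1 (by simpa using hψ)

end commutant

end InnerProductSpace

theorem unitarily_G_equivalent_iff_expectations_on_span_eq_general
    {𝕜 : Type*} [RCLike 𝕜] {G : Type*} [Group G]
    {H : Type*} [NormedAddCommGroup H] [InnerProductSpace 𝕜 H] [FiniteDimensional 𝕜 H]
    (U : G →* (H ≃ₗᵢ[𝕜] H)) (ψ φ : H) :
    (∃ V : H ≃ₗᵢ[𝕜] H, (∀ g : G, ∀ x : H, V (U g x) = U g (V x)) ∧ V ψ = φ) ↔
      (∀ A ∈ Submodule.span 𝕜
          (Set.range fun g : G => ((U g).toLinearEquiv.toLinearMap : H →ₗ[𝕜] H)),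
        ⟪ψ, A ψ⟫_𝕜 = ⟪φ, A φ⟫_𝕜) := by
  constructor
  · rintro ⟨V, hV, rfl⟩ A hA
    have hVA : A ∈ Subalgebra.centralizer 𝕜 {V.toLinearEquiv.toLinearMap} := by
      rw [← Subalgebra.mem_toSubmodule]
      refine Submodule.span_le.2 ?_ hA
      rintro _ ⟨g, rfl⟩ _ rfl
      exact LinearMap.ext (hV g)
    have hVAψ : V (A ψ) = A (V ψ) := LinearMap.congr_fun (hVA _ rfl) ψ
    rw [← hVAψ, V.inner_map_map]
  · intro h
    obtain ⟨W, hW, hpi, hψ, rfl⟩ := exists_isPartialIsometry_mem_commutant (U := U)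
      fun g => h _ (Submodule.subset_span ⟨g, rfl⟩)
    obtain ⟨V, hV, hVV, hVW⟩ := hpi.exists_mem_star_mul_self_eq_one_extending hW
    obtain ⟨e, he⟩ := exists_linearIsometryEquiv_of_star_mul_self_eq_one hVV
    refine ⟨e, fun g x => ?_, ?_⟩
    · rw [he, he]
      exact (LinearMap.congr_fun (mem_commutant_iff.1 hV g).eq x).symm
    · rw [he, ← hVW, End.mul_apply, hψ]

/-- **Theorem 1, reformulated.** Two unit vectors `ψ, φ` of a
finite-dimensional unitary representation `U` of `G` are unitarily `G`-equivalent iff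
`⟪ψ, A ψ⟫ = ⟪φ, A φ⟫` for every operator `A` in the linear span of `{U g : g ∈ G}`
inside the endomorphisms of `H` (equivalently, iff the reductions onto irreps of the
two states coincide). -/
theorem unitarily_G_equivalent_iff_expectations_on_span_eq
    {G : Type*} [Group G]
    {H : Type*} [NormedAddCommGroup H] [InnerProductSpace ℂ H] [FiniteDimensional ℂ H]
    (U : G →* (H ≃ₗᵢ[ℂ] H)) (ψ φ : H) (hψ : ‖ψ‖ = 1) (hφ : ‖φ‖ = 1) :
    (∃ V : H ≃ₗᵢ[ℂ] H, (∀ g : G, ∀ x : H, V (U g x) = U g (V x)) ∧ V ψ = φ) ↔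
      (∀ A ∈ Submodule.span ℂ
          (Set.range fun g : G => ((U g).toLinearEquiv.toLinearMap : H →ₗ[ℂ] H)),
        ⟪ψ, A ψ⟫ = ⟪φ, A φ⟫) := by
  exact unitarily_G_equivalent_iff_expectations_on_span_eq_general U ψ φ
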